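/- For a small category C, identify each morphism of F_nC = F^{n+1}C with its underlying word of non-identity morphisms of C equipped with n+1 levels of parentheses, and let α : N_m(F_nC) → ⨿_{k∈ℕ} N_k(C) be the map defined on the m-nerve by deleting all parentheses, i.e., sending a string of m composable F_nC-morphisms to the concatenated underlying string of morphisms of C. If f : C → D is a functor sending non-identity morphisms to non-identity morphisms, then for all m, n the square with top row N_m(F_nC) → N_m(F_nD) (induced by f), bottom row ⨿_k N_k(C) → ⨿_k N_k(D) (induced by f), and vertical maps α, is a pull-back square of sets. -/

import Mathlib

noncomputable section

open CategoryTheory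

/-- The topological simplex associated to `x : SimplexCategory` (formerly in Mathlib). -/
def SimplexCategory.toTopObj (x : SimplexCategory) : Set (Fin (x.len + 1) → NNReal) :=
  { f : Fin (x.len + 1) → NNReal | ∑ i, f i = 1 }

/-- A morphism in `SimplexCategory` induces a map on the associated topological simplices
(formerly in Mathlib). -/
def SimplexCategory.toTopMap {x y : SimplexCategory} (f : x ⟶ y) (g : x.toTopObj) :
    y.toTopObj :=
  ⟨fun i => ∑ j ∈ Finset.univ.filter (fun j => f.toOrderHom j = i), g.1 j,
    (Finset.sum_fiberwise Finset.univ (fun j => f.toOrderHom j) g.1).trans g.2⟩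

namespace HC

variable {C : Type} {D : Type}

/-- Hom-sets of an explicitly given category structure. -/
abbrev Hm (T : SmallCategory C) (c d : C) : Type :=
  @Quiver.Hom C (T.toCategoryStruct.toQuiver) c d

/-- Identity of an explicitly given category structure. -/
abbrev idm (T : SmallCategory C) (c : C) : Hm T c c :=
  @CategoryStruct.id C T.toCategoryStruct c

/-- Composition of an explicitly given category structure (diagrammatic order). -/
abbrev cmp (T : SmallCategory C) {a b c : C} (f : Hm T a b) (g : Hm T b c) : Hm T a c :=
  @CategoryStruct.comp C T.toCategoryStruct a b c f g

/-- `f` "is an identity": there is an equality of objects `h : c = d` with `f = eqToHom h`. -/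
def IsIdLike (T : SmallCategory C) {c d : C} (f : Hm T c d) : Prop :=
  ∃ h : c = d, f = @eqToHom C T.toCategoryStruct c d h

/-- A non-identity morphism of `(C, T)`, i.e. a letter of the free category `FC`. -/
def Edge (T : SmallCategory C) (c d : C) : Type :=
  {f : Hm T c d // ¬ IsIdLike T f}

/-- A word of composable non-identity morphisms of `(C, T)`:
a morphism of the free category `FC`. -/
inductive PathE (T : SmallCategory C) : C → C → Type
  | nil (c : C) : PathE T c c
  | cons {a b c : C} (p : PathE T a b) (e : Edge T b c) : PathE T a c

/-- Concatenation of words. -/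
def PathE.comp {T : SmallCategory C} {a b : C} (p : PathE T a b) :
    ∀ {c : C}, PathE T b c → PathE T a c
  | _, .nil _ => p
  | _, .cons q e => .cons (p.comp q) e

@[simp] theorem PathE.comp_nil {T : SmallCategory C} {a b : C} (p : PathE T a b) :
    p.comp (PathE.nil b) = p := rfl

@[simp] theorem PathE.comp_cons {T : SmallCategory C} {a b c d : C} (p : PathE T a b)
    (q : PathE T b c) (e : Edge T c d) : p.comp (q.cons e) = (p.comp q).cons e := rfl

theorem PathE.nil_comp {T : SmallCategory C} :
    ∀ {a b : C} (p : PathE T a b), (PathE.nil a).comp p = p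
  | _, _, .nil _ => rfl
  | _, _, .cons q e => by rw [PathE.comp_cons, PathE.nil_comp q]

theorem PathE.comp_assoc {T : SmallCategory C} :
    ∀ {a b c d : C} (p : PathE T a b) (q : PathE T b c) (r : PathE T c d),
      (p.comp q).comp r = p.comp (q.comp r)
  | _, _, _, _, _, _, .nil _ => rfl
  | _, _, _, _, p, q, .cons r e => by
      simp only [PathE.comp_cons, PathE.comp_assoc p q r]

/-- The free category `FC` on `(C, T)`: same objects, morphisms are words of composable
non-identity morphisms, composition is concatenation, the empty word is the identity. -/
def freeCatStr (T : SmallCategory C) : SmallCategory C where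
  Hom := PathE T
  id := PathE.nil
  comp := fun p q => PathE.comp p q
  id_comp := fun p => PathE.nil_comp p
  comp_id := fun _ => rfl
  assoc := fun p q r => PathE.comp_assoc p q r


/-- Composing up a word into a morphism of the underlying category:
the effect of the counit `U : FC → C` on morphisms. -/
def composePath (T : SmallCategory C) : ∀ {a b : C}, PathE T a b → Hm T a b
  | _, _, .nil c => idm T c
  | _, _, .cons p e => cmp T (composePath T p) e.1

/-- The empty word, transported along an equality of objects. -/
def idPath (T : SmallCategory C) {c d : C} (h : c = d) : PathE T c d :=
  h ▸ PathE.nil c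

/-- The single-letter word on a (possibly identity) morphism: the operator `F`.
If `f` is an identity, the result is the empty word. -/
def Fop (T : SmallCategory C) {c d : C} (f : Hm T c d) : PathE T c d :=
  letI := Classical.dec (IsIdLike T f)
  if h : IsIdLike T f then idPath T h.choose
  else (PathE.nil c).cons ⟨f, h⟩

/-- The image of an edge under the free-category action of a "prefunctor"
`(Fo, Fh)`: the letter is kept if its image is not an identity, and dropped otherwise. -/
def edgeIm {S : SmallCategory C} {U : SmallCategory D} (Fo : C → D)
    (Fh : ∀ {c d : C}, Hm S c d → Hm U (Fo c) (Fo d))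
    {c d : C} (e : Edge S c d) : PathE U (Fo c) (Fo d) :=
  Fop U (Fh e.1)

/-- The action of the free-category functor `F` on a "prefunctor" `(Fo, Fh)`. -/
def pmapPath {S : SmallCategory C} {U : SmallCategory D} (Fo : C → D)
    (Fh : ∀ {c d : C}, Hm S c d → Hm U (Fo c) (Fo d)) :
    ∀ {c d : C}, PathE S c d → PathE U (Fo c) (Fo d)
  | _, _, .nil c => PathE.nil (Fo c)
  | _, _, .cons p e => (pmapPath Fo Fh p).comp (edgeIm Fo Fh e)

theorem single_not_idLike {T : SmallCategory C} {c d : C} (e : Edge T c d) :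
    ¬ IsIdLike (freeCatStr T) ((PathE.nil c).cons e) := by
  rintro ⟨h, hf⟩
  subst h
  have he : @eqToHom C (freeCatStr T).toCategoryStruct c c rfl = PathE.nil c := rfl
  rw [he] at hf
  have hf' : @Eq (PathE T c c) ((PathE.nil c).cons e) (PathE.nil c) := hf
  cases hf'

/-- The effect of the comultiplication `Δ : FC → F²C` on morphisms:
each letter `f` becomes the one-letter word `((f))`. -/
def comulH (T : SmallCategory C) : ∀ {a b : C}, PathE T a b → PathE (freeCatStr T) a b
  | _, _, .nil c => PathE.nil c
  | _, _, .cons p e =>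
      (comulH T p).cons ⟨(PathE.nil _).cons e, single_not_idLike e⟩

/-- The Dwyer–Kan resolution: `dkStr T n` is the category structure of
`F_n(C,T) = F^{n+1}(C,T)`. -/
def dkStr (T : SmallCategory C) : ℕ → SmallCategory C
  | 0 => freeCatStr T
  | n + 1 => freeCatStr (dkStr T n)

/-- Auxiliary: the face operator, recursing on `i` first. -/
def faceHAux (T : SmallCategory C) : ∀ (i n : ℕ) {c d : C},
    Hm (dkStr T (n + 1)) c d → Hm (dkStr T n) c d
  | 0, n => fun p => composePath (dkStr T n) p
  | _ + 1, 0 => fun p =>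
      pmapPath (S := dkStr T 0) (U := T) id (fun f => composePath T f) p
  | i + 1, n + 1 => fun p =>
      pmapPath (S := dkStr T (n + 1)) (U := dkStr T n) id (fun f => faceHAux T i n f) p

/-- The face functor `d_i = F^i(U_{F^{n+1-i}C}) : F_{n+1}C → F_nC` of the Dwyer–Kan
resolution, on morphisms.  (For `i > n+1` the value is irrelevant.) -/
def faceH (T : SmallCategory C) (n i : ℕ) {c d : C}
    (p : Hm (dkStr T (n + 1)) c d) : Hm (dkStr T n) c d :=
  faceHAux T i n p

/-- Auxiliary: the degeneracy operator, recursing on `i` first. -/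
def degHAux (T : SmallCategory C) : ∀ (i n : ℕ) {c d : C},
    Hm (dkStr T n) c d → Hm (dkStr T (n + 1)) c d
  | 0, 0 => fun p => comulH T p
  | 0, n + 1 => fun p => comulH (dkStr T n) p
  | _ + 1, 0 => fun p => comulH T p
  | i + 1, n + 1 => fun p =>
      pmapPath (S := dkStr T n) (U := dkStr T (n + 1)) id (fun f => degHAux T i n f) p

/-- The degeneracy functor `s_i = F^i(Δ_{F^{n-i}C}) : F_nC → F_{n+1}C` of the Dwyer–Kan
resolution, on morphisms.  (For `i > n` the value is irrelevant.) -/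
def degH (T : SmallCategory C) (n i : ℕ) {c d : C}
    (p : Hm (dkStr T n) c d) : Hm (dkStr T (n + 1)) c d :=
  degHAux T i n p

/-! ### Equation lemmas -/

@[simp] theorem composePath_nil {T : SmallCategory C} (c : C) :
    composePath T (PathE.nil c) = idm T c := by rw [composePath]

@[simp] theorem composePath_cons {T : SmallCategory C} {a b c : C}
    (p : PathE T a b) (e : Edge T b c) :
    composePath T (p.cons e) = cmp T (composePath T p) e.1 := by rw [composePath]

@[simp] theorem pmapPath_nil {S : SmallCategory C} {U : SmallCategory D} (Fo : C → D)
    (Fh : ∀ {c d : C}, Hm S c d → Hm U (Fo c) (Fo d)) (c : C) :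
    pmapPath Fo Fh (PathE.nil c) = PathE.nil (Fo c) := by rw [pmapPath]

@[simp] theorem pmapPath_cons {S : SmallCategory C} {U : SmallCategory D} (Fo : C → D)
    (Fh : ∀ {c d : C}, Hm S c d → Hm U (Fo c) (Fo d)) {a b c : C}
    (p : PathE S a b) (e : Edge S b c) :
    pmapPath Fo Fh (p.cons e) = (pmapPath Fo Fh p).comp (edgeIm Fo Fh e) := by rw [pmapPath]

@[simp] theorem comulH_nil {T : SmallCategory C} (c : C) :
    comulH T (PathE.nil c) = PathE.nil c := by rw [comulH]

@[simp] theorem comulH_cons {T : SmallCategory C} {a b c : C}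
    (p : PathE T a b) (e : Edge T b c) :
    comulH T (p.cons e) =
      (comulH T p).cons ⟨(PathE.nil _).cons e, single_not_idLike e⟩ := by rw [comulH]

/-! ### Functoriality of the structural operations -/

/-- `(Fo, Fh)` is a functor: it preserves identities and composition. -/
def IsFuncM {S : SmallCategory C} {U : SmallCategory D} (Fo : C → D)
    (Fh : ∀ {c d : C}, Hm S c d → Hm U (Fo c) (Fo d)) : Prop :=
  (∀ c : C, Fh (idm S c) = idm U (Fo c)) ∧
  (∀ {a b c : C} (f : Hm S a b) (g : Hm S b c), Fh (cmp S f g) = cmp U (Fh f) (Fh g))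

section Lemmas

variable {S : SmallCategory C} {U : SmallCategory D}
variable {Fo : C → D} {Fh : ∀ {c d : C}, Hm S c d → Hm U (Fo c) (Fo d)}

theorem eqToHom_eq_idm {T : SmallCategory C} (c : C) :
    @eqToHom C T.toCategoryStruct c c rfl = idm T c := rfl

theorem funcM_eqToHom (hF : IsFuncM Fo Fh) {c d : C} (h : c = d) :
    Fh (@eqToHom C S.toCategoryStruct c d h) = @eqToHom D U.toCategoryStruct (Fo c) (Fo d) (congrArg Fo h) := by
  subst h; exact hF.1 c

theorem pmapPath_comp {a b c : C} (p : PathE S a b) (q : PathE S b c) :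
    pmapPath Fo Fh (p.comp q) = (pmapPath Fo Fh p).comp (pmapPath Fo Fh q) := by
  induction q with
  | nil => simp
  | cons q e ih => simp [ih, PathE.comp_assoc]

theorem pmapPath_isFuncM :
    IsFuncM (S := freeCatStr S) (U := freeCatStr U) Fo
      (fun {_ _} p => pmapPath Fo Fh p) :=
  ⟨fun c => pmapPath_nil Fo Fh c, fun p q => pmapPath_comp p q⟩

theorem composePath_comp {T : SmallCategory C} {a b c : C}
    (p : PathE T a b) (q : PathE T b c) :
    composePath T (p.comp q) = cmp T (composePath T p) (composePath T q) := by
  induction q with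
  | nil => simp
  | cons q e ih => simp [ih]

theorem composePath_isFuncM {T : SmallCategory C} :
    IsFuncM (S := freeCatStr T) (U := T) id (fun {_ _} p => composePath T p) :=
  ⟨fun c => composePath_nil c, fun p q => composePath_comp p q⟩

theorem comulH_comp {T : SmallCategory C} {a b c : C}
    (p : PathE T a b) (q : PathE T b c) :
    comulH T (p.comp q) = (comulH T p).comp (comulH T q) := by
  induction q with
  | nil => simp
  | cons q e ih => simp [ih]; rfl

theorem comulH_isFuncM {T : SmallCategory C} :
    IsFuncM (S := freeCatStr T) (U := freeCatStr (freeCatStr T)) id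
      (fun {_ _} p => comulH T p) :=
  ⟨fun c => comulH_nil c, fun p q => comulH_comp p q⟩

theorem idPath_eq_eqToHom {T : SmallCategory C} {x y : C} (h : x = y) :
    idPath T h = @eqToHom C (freeCatStr T).toCategoryStruct x y h := by
  subst h; rfl

theorem idPath_isIdLike {T : SmallCategory C} {x y : C} (h : x = y) :
    IsIdLike (freeCatStr T) (idPath T h) :=
  ⟨h, idPath_eq_eqToHom h⟩

theorem composePath_idPath {T : SmallCategory C} {x y : C} (h : x = y) :
    composePath T (idPath T h) = @eqToHom C T.toCategoryStruct x y h := by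
  subst h; simp [idPath]

theorem composePath_edgeIm {c d : C} (e : Edge S c d) :
    composePath U (edgeIm Fo Fh e) = Fh e.1 := by
  unfold edgeIm Fop
  split
  · next h => exact (composePath_idPath h.choose).trans h.choose_spec.symm
  · next h =>
      exact (composePath_cons (PathE.nil _) ⟨_, h⟩).trans
        (by rw [composePath_nil]; exact @Category.id_comp D U _ _ _)

theorem pmapPath_idPath {x y : C} (h : x = y) :
    pmapPath Fo Fh (idPath S h) = idPath U (congrArg Fo h) := by
  subst h; simp [idPath]

theorem comulH_idPath {T : SmallCategory C} {x y : C} (h : x = y) :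
    comulH T (idPath T h) = idPath (freeCatStr T) h := by
  subst h; simp [idPath]

/-- Naturality of the counit. -/
theorem counit_nat (hF : IsFuncM Fo Fh) {a b : C} (p : PathE S a b) :
    composePath U (pmapPath Fo Fh p) = Fh (composePath S p) := by
  induction p with
  | nil => simp; exact (hF.1 _).symm
  | cons p e ih =>
      rw [pmapPath_cons, composePath_comp, ih, composePath_edgeIm, composePath_cons]
      exact (hF.2 _ _).symm

/-- `F` applied to the one-letter-word operator. -/
theorem pmap_Fop {D' : Type} {V : SmallCategory D'}
    {Go : D → D'} {Gh : ∀ {c d : D}, Hm U c d → Hm V (Go c) (Go d)}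
    (hG : IsFuncM Go Gh) {x y : D} (f : Hm U x y) :
    pmapPath Go Gh (Fop U f) = Fop V (Gh f) := by
  unfold Fop
  split
  · next h =>
      rw [pmapPath_idPath]
      have hf : Gh f = @eqToHom D' V.toCategoryStruct (Go x) (Go y) (congrArg Go h.choose) := by
        conv_lhs => rw [h.choose_spec]
        exact funcM_eqToHom hG h.choose
      rw [dif_pos ⟨congrArg Go h.choose, hf⟩]
  · next h =>
      refine (pmapPath_cons Go Gh (PathE.nil x) ⟨f, h⟩).trans ?_
      rw [pmapPath_nil, PathE.nil_comp]
      rfl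

theorem pmap_edgeIm {D' : Type} {V : SmallCategory D'}
    {Go : D → D'} {Gh : ∀ {c d : D}, Hm U c d → Hm V (Go c) (Go d)}
    (hG : IsFuncM Go Gh) {c d : C} (e : Edge S c d) :
    pmapPath Go Gh (edgeIm Fo Fh e) =
      edgeIm (fun c => Go (Fo c)) (fun {_ _} f => Gh (Fh f)) e :=
  pmap_Fop hG (Fh e.1)

/-- `F(G) ∘ F(H) = F(G ∘ H)` on morphisms. -/
theorem pmap_pmap {D' : Type} {V : SmallCategory D'}
    {Go : D → D'} {Gh : ∀ {c d : D}, Hm U c d → Hm V (Go c) (Go d)}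
    (hG : IsFuncM Go Gh) {a b : C} (p : PathE S a b) :
    pmapPath Go Gh (pmapPath Fo Fh p) =
      pmapPath (fun c => Go (Fo c)) (fun {_ _} f => Gh (Fh f)) p := by
  induction p with
  | nil => simp
  | cons p e ih =>
      rw [pmapPath_cons, pmapPath_comp, ih, pmapPath_cons, pmap_edgeIm hG]

/-- Specialization of `pmap_pmap` where the inner prefunctor is the identity on objects. -/
theorem pmap_pmap_id_inner {S' : SmallCategory C}
    {Fh' : ∀ {c d : C}, Hm S' c d → Hm S c d}
    (hF : IsFuncM Fo Fh) {a b : C} (p : PathE S' a b) :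
    pmapPath Fo Fh (pmapPath (S := S') (U := S) id (fun {_ _} f => Fh' f) p) =
      pmapPath (S := S') (U := U) Fo (fun {_ _} f => Fh (Fh' f)) p :=
  pmap_pmap hF p

/-- Specialization of `pmap_pmap` where the outer prefunctor is the identity on objects. -/
theorem pmap_pmap_id_outer {U' : SmallCategory D}
    {Gh : ∀ {c d : D}, Hm U c d → Hm U' c d}
    (hG : IsFuncM (S := U) (U := U') id (fun {_ _} f => Gh f)) {a b : C} (p : PathE S a b) :
    pmapPath (S := U) (U := U') id (fun {_ _} f => Gh f) (pmapPath Fo Fh p) =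
      pmapPath (S := S) (U := U') Fo (fun {_ _} f => Gh (Fh f)) p :=
  pmap_pmap hG p

theorem pmap_congr {Fh' : ∀ {c d : C}, Hm S c d → Hm U (Fo c) (Fo d)}
    (hc : ∀ {c d : C} (f : Hm S c d), Fh f = Fh' f) {a b : C} (p : PathE S a b) :
    pmapPath Fo Fh p = pmapPath Fo Fh' p := by
  induction p with
  | nil => simp
  | cons p e ih =>
      rw [pmapPath_cons, pmapPath_cons, ih]
      congr 1
      unfold edgeIm
      exact congrArg (Fop U) (hc e.1)

theorem comul_Fop {x y : D} (g : Hm U x y) :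
    comulH U (Fop U g) = Fop (freeCatStr U) (Fop U g) := by
  unfold Fop
  by_cases h : IsIdLike U g
  · rw [dif_pos h, comulH_idPath, dif_pos (idPath_isIdLike _)]
  · rw [dif_neg h, dif_neg (single_not_idLike (T := U) ⟨g, h⟩)]
    exact (comulH_cons (PathE.nil x) ⟨g, h⟩).trans (by rw [comulH_nil])

/-- Naturality of the comultiplication. -/
theorem comul_nat (hF : IsFuncM Fo Fh) {a b : C} (p : PathE S a b) :
    comulH U (pmapPath Fo Fh p) =
      pmapPath (S := freeCatStr S) (U := freeCatStr U) Fo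
        (fun {_ _} q => pmapPath Fo Fh q) (comulH S p) := by
  induction p with
  | nil =>
      simp
      exact (pmapPath_nil (S := freeCatStr S) (U := freeCatStr U) Fo
        (fun {_ _} q => pmapPath Fo Fh q) _).symm
  | cons p e ih =>
      rw [pmapPath_cons, comulH_comp, ih, comulH_cons]
      refine Eq.trans ?_ (pmapPath_cons (S := freeCatStr S) (U := freeCatStr U) Fo
        (fun {_ _} q => pmapPath Fo Fh q) (comulH S p) _).symm
      congr 1
      show comulH U (edgeIm Fo Fh e) =
        edgeIm (S := freeCatStr S) (U := freeCatStr U) Fo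
          (fun {_ _} q => pmapPath Fo Fh q) _
      unfold edgeIm
      have hs : pmapPath Fo Fh ((PathE.nil _).cons e) = Fop U (Fh e.1) := by
        rw [pmapPath_cons, pmapPath_nil, PathE.nil_comp]; rfl
      exact (comul_Fop (Fh e.1)).trans (congrArg (Fop (freeCatStr U)) hs.symm)

end Lemmas

/-! ### The Dwyer–Kan resolution of a functor, and naturality of faces and degeneracies -/

/-- The action `F_n(G) = F^{n+1}(G)` of the Dwyer–Kan resolution on a functor
(given by "prefunctor data" `(Fo, Fh)`), on morphisms. -/
def dkMapH {S : SmallCategory C} {U : SmallCategory D} (Fo : C → D)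
    (Fh : ∀ {c d : C}, Hm S c d → Hm U (Fo c) (Fo d)) :
    ∀ (n : ℕ) {c d : C}, Hm (dkStr S n) c d → Hm (dkStr U n) (Fo c) (Fo d)
  | 0 => fun p => pmapPath Fo Fh p
  | n + 1 => fun p =>
      pmapPath (S := dkStr S n) (U := dkStr U n) Fo (fun f => dkMapH Fo Fh n f) p

section Nat

variable {S : SmallCategory C} {U : SmallCategory D}
variable {Fo : C → D} {Fh : ∀ {c d : C}, Hm S c d → Hm U (Fo c) (Fo d)}

theorem dkMapH_isFuncM (n : ℕ) :
    IsFuncM (S := dkStr S n) (U := dkStr U n) Fo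
      (fun {_ _} f => dkMapH Fo Fh n f) := by
  match n with
  | 0 => exact pmapPath_isFuncM
  | n + 1 => exact pmapPath_isFuncM

theorem faceH_isFuncM (T : SmallCategory C) (n i : ℕ) :
    IsFuncM (S := dkStr T (n+1)) (U := dkStr T n) id
      (fun {_ _} f => faceH T n i f) := by
  unfold faceH
  match i, n with
  | 0, n => exact composePath_isFuncM (T := dkStr T n)
  | i + 1, 0 => exact pmapPath_isFuncM
  | i + 1, n + 1 => exact pmapPath_isFuncM

theorem degH_isFuncM (T : SmallCategory C) (n i : ℕ) :
    IsFuncM (S := dkStr T n) (U := dkStr T (n+1)) id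
      (fun {_ _} f => degH T n i f) := by
  unfold degH
  match i, n with
  | 0, 0 => exact comulH_isFuncM (T := T)
  | 0, n + 1 => exact comulH_isFuncM (T := dkStr T n)
  | i + 1, 0 => exact comulH_isFuncM (T := T)
  | i + 1, n + 1 => exact pmapPath_isFuncM

/-- Naturality of the face operators with respect to `F_•` applied to a functor. -/
theorem dkMapH_face (hF : IsFuncM Fo Fh) :
    ∀ (i n : ℕ) {c d : C} (w : Hm (dkStr S (n+1)) c d),
      dkMapH Fo Fh n (faceH S n i w) = faceH U n i (dkMapH Fo Fh (n+1) w)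
  | 0, n, c, d, w => (counit_nat (dkMapH_isFuncM n) w).symm
  | i + 1, 0, c, d, w => by
      show pmapPath Fo Fh (pmapPath (S := dkStr S 0) (U := S) id
          (fun {_ _} f => composePath S f) w)
        = pmapPath (S := dkStr U 0) (U := U) id (fun {_ _} f => composePath U f)
            (pmapPath (S := dkStr S 0) (U := dkStr U 0) Fo
              (fun {_ _} f => pmapPath Fo Fh f) w)
      refine (pmap_pmap_id_inner (S' := dkStr S 0) (Fh' := fun {_ _} f => composePath S f)
        hF w).trans (Eq.trans ?_ (pmap_pmap_id_outer (U := dkStr U 0) (U' := U)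
          (Gh := fun {_ _} f => composePath U f) (composePath_isFuncM (T := U)) w).symm)
      refine pmap_congr (fun {x y} f => ?_) w
      exact (counit_nat hF f).symm
  | i + 1, n + 1, c, d, w => by
      show pmapPath (S := dkStr S n) (U := dkStr U n) Fo
          (fun {_ _} f => dkMapH Fo Fh n f)
          (pmapPath (S := dkStr S (n+1)) (U := dkStr S n) id
            (fun {_ _} f => faceH S n i f) w)
        = pmapPath (S := dkStr U (n+1)) (U := dkStr U n) id
            (fun {_ _} f => faceH U n i f)
            (pmapPath (S := dkStr S (n+1)) (U := dkStr U (n+1)) Fo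
              (fun {_ _} f => dkMapH Fo Fh (n+1) f) w)
      rw [pmap_pmap_id_inner (dkMapH_isFuncM n) w, pmap_pmap_id_outer (faceH_isFuncM U n i) w]
      refine pmap_congr (fun {x y} f => ?_) w
      exact dkMapH_face hF i n f

/-- Naturality of the degeneracy operators with respect to `F_•` applied to a functor. -/
theorem dkMapH_deg (hF : IsFuncM Fo Fh) :
    ∀ (i n : ℕ) {c d : C} (w : Hm (dkStr S n) c d),
      dkMapH Fo Fh (n+1) (degH S n i w) = degH U n i (dkMapH Fo Fh n w)
  | 0, 0, c, d, w => (comul_nat hF w).symm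
  | 0, n + 1, c, d, w => (comul_nat (dkMapH_isFuncM n) w).symm
  | i + 1, 0, c, d, w => (comul_nat hF w).symm
  | i + 1, n + 1, c, d, w => by
      show pmapPath (S := dkStr S (n+1)) (U := dkStr U (n+1)) Fo
          (fun {_ _} f => dkMapH Fo Fh (n+1) f)
          (pmapPath (S := dkStr S n) (U := dkStr S (n+1)) id
            (fun {_ _} f => degH S n i f) w)
        = pmapPath (S := dkStr U n) (U := dkStr U (n+1)) id
            (fun {_ _} f => degH U n i f)
            (pmapPath (S := dkStr S n) (U := dkStr U n) Fo
              (fun {_ _} f => dkMapH Fo Fh n f) w)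
      rw [pmap_pmap_id_inner (dkMapH_isFuncM (n+1)) w, pmap_pmap_id_outer (degH_isFuncM U n i) w]
      refine pmap_congr (fun {x y} f => ?_) w
      exact dkMapH_deg hF i n f

end Nat

/-! ### The augmentation -/

/-- The counit–comultiplication identity `U ∘ Δ = id`. -/
theorem composePath_comulH {T : SmallCategory C} {a b : C} (p : PathE T a b) :
    composePath (freeCatStr T) (comulH T p) = p := by
  induction p with
  | nil => simp; rfl
  | cons p e ih =>
      rw [comulH_cons]
      exact (composePath_cons (comulH T p) _).trans
        (congrArg (fun q => PathE.comp q ((PathE.nil _).cons e)) ih)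

/-- The augmentation `ε : F_nC → C` on morphisms: composing everything up. -/
def epsH (T : SmallCategory C) : ∀ (n : ℕ) {c d : C}, Hm (dkStr T n) c d → Hm T c d
  | 0 => fun p => composePath T p
  | n + 1 => fun p => epsH T n (composePath (dkStr T n) p)

theorem epsH_isFuncM (T : SmallCategory C) (n : ℕ) :
    IsFuncM (S := dkStr T n) (U := T) id (fun {_ _} f => epsH T n f) := by
  induction n with
  | zero => exact composePath_isFuncM
  | succ n ih =>
      constructor
      · intro c
        show epsH T n (composePath (dkStr T n) (PathE.nil c)) = idm T c
        exact (congrArg (fun q => epsH T n q) (composePath_nil c)).trans (ih.1 c)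
      · intro a b c f g
        show epsH T n (composePath (dkStr T n) (PathE.comp f g)) = _
        exact (congrArg (fun q => epsH T n q) (composePath_comp f g)).trans (ih.2 _ _)

/-- The augmentation is compatible with the face operators. -/
theorem epsH_face (T : SmallCategory C) :
    ∀ (i n : ℕ) {c d : C} (w : Hm (dkStr T (n+1)) c d),
      epsH T n (faceH T n i w) = epsH T (n+1) w
  | 0, n, c, d, w => rfl
  | i + 1, 0, c, d, w => by
      show composePath T (pmapPath (S := dkStr T 0) (U := T) id
        (fun {_ _} f => composePath T f) w) = _
      exact counit_nat (S := dkStr T 0) (composePath_isFuncM (T := T)) w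
  | i + 1, n + 1, c, d, w => by
      show epsH T n (composePath (dkStr T n)
        (pmapPath (S := dkStr T (n+1)) (U := dkStr T n) id
          (fun {_ _} f => faceH T n i f) w)) = _
      rw [counit_nat (faceH_isFuncM T n i) w, epsH_face T i n]
      rfl

/-- The augmentation is compatible with the degeneracy operators. -/
theorem epsH_deg (T : SmallCategory C) :
    ∀ (i n : ℕ) {c d : C} (w : Hm (dkStr T n) c d),
      epsH T (n+1) (degH T n i w) = epsH T n w
  | 0, 0, c, d, w => by
      show composePath T (composePath (freeCatStr T) (comulH T w)) = _
      exact congrArg (fun q => composePath T q) (composePath_comulH w)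
  | 0, n + 1, c, d, w => by
      show epsH T (n+1) (composePath (freeCatStr (dkStr T n)) (comulH (dkStr T n) w)) = _
      exact congrArg (fun q => epsH T (n+1) q) (composePath_comulH w)
  | i + 1, 0, c, d, w => by
      show composePath T (composePath (freeCatStr T) (comulH T w)) = _
      exact congrArg (fun q => composePath T q) (composePath_comulH w)
  | i + 1, n + 1, c, d, w => by
      show epsH T (n+1) (composePath (dkStr T (n+1))
        (pmapPath (S := dkStr T n) (U := dkStr T (n+1)) id
          (fun {_ _} f => degH T n i f) w)) = _
      rw [counit_nat (degH_isFuncM T n i) w, epsH_deg T i n]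
      rfl


section MoreNat

variable {S : SmallCategory C} {U : SmallCategory D}
variable {Fo : C → D} {Fh : ∀ {c d : C}, Hm S c d → Hm U (Fo c) (Fo d)}

theorem dkMapH_comp {D' : Type} {V : SmallCategory D'}
    {Go : D → D'} {Gh : ∀ {c d : D}, Hm U c d → Hm V (Go c) (Go d)}
    (hG : IsFuncM Go Gh) :
    ∀ (n : ℕ) {c d : C} (w : Hm (dkStr S n) c d),
      dkMapH Go Gh n (dkMapH Fo Fh n w) =
        dkMapH (fun c => Go (Fo c)) (fun {_ _} f => Gh (Fh f)) n w
  | 0, c, d, w => pmap_pmap hG w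
  | n + 1, c, d, w => by
      show pmapPath (S := dkStr U n) (U := dkStr V n) Go
          (fun {_ _} f => dkMapH Go Gh n f)
          (pmapPath (S := dkStr S n) (U := dkStr U n) Fo
            (fun {_ _} f => dkMapH Fo Fh n f) w) = _
      rw [pmap_pmap (dkMapH_isFuncM (Fo := Go) (Fh := Gh) n) w]
      refine pmap_congr (fun {x y} f => ?_) w
      exact dkMapH_comp hG n f

theorem dkMapH_congr {Fh' : ∀ {c d : C}, Hm S c d → Hm U (Fo c) (Fo d)}
    (hc : ∀ {c d : C} (f : Hm S c d), Fh f = Fh' f) :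
    ∀ (n : ℕ) {c d : C} (w : Hm (dkStr S n) c d),
      dkMapH Fo Fh n w = dkMapH Fo Fh' n w
  | 0, c, d, w => pmap_congr hc w
  | n + 1, c, d, w => by
      show pmapPath (S := dkStr S n) (U := dkStr U n) Fo
          (fun {_ _} f => dkMapH Fo Fh n f) w = _
      refine pmap_congr (fun {x y} f => ?_) w
      exact dkMapH_congr hc n f

end MoreNat

/-! ### The simplicial enrichment of `Top` and homotopy coherent diagrams -/

/-- The geometric `n`-simplex. -/
abbrev TopSimplex (n : ℕ) : Type :=
  ↥(SimplexCategory.toTopObj (SimplexCategory.mk n))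

/-- A homotopy coherent diagram of shape `(C, T)` in `Top`: a simplicial functor from the
Dwyer–Kan resolution `F_•(C,T)` to `Top` (with its simplicial enrichment
`map(X,Y)_n = Top(X × |Δⁿ|, Y)`): it assigns a space `obj c` to each object and a continuous
map `obj c × |Δⁿ| → obj d` to each morphism of `F_n(C,T)`, compatibly with identities,
composition, faces and degeneracies. -/
structure HCDiagram (C : Type) (T : SmallCategory C) : Type 1 where
  obj : C → TopCat.{0}
  hom : ∀ (n : ℕ) {c d : C}, Hm (dkStr T n) c d → C(↑(obj c) × TopSimplex n, ↑(obj d))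
  hom_id : ∀ (c : C) (x : ↑(obj c)) (t : TopSimplex 0),
    hom 0 (idm (dkStr T 0) c) (x, t) = x
  hom_comp : ∀ (n : ℕ) {c d e : C} (f : Hm (dkStr T n) c d) (g : Hm (dkStr T n) d e)
    (x : ↑(obj c)) (t : TopSimplex n),
    hom n (cmp (dkStr T n) f g) (x, t) = hom n g (hom n f (x, t), t)
  hom_face : ∀ (n : ℕ) (i : Fin (n + 2)) {c d : C} (w : Hm (dkStr T (n + 1)) c d)
    (x : ↑(obj c)) (t : TopSimplex n),
    hom n (faceH T n i.1 w) (x, t) =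
      hom (n + 1) w (x, SimplexCategory.toTopMap (SimplexCategory.δ i) t)
  hom_deg : ∀ (n : ℕ) (i : Fin (n + 1)) {c d : C} (w : Hm (dkStr T n) c d)
    (x : ↑(obj c)) (t : TopSimplex (n + 1)),
    hom (n + 1) (degH T n i.1 w) (x, t) =
      hom n w (x, SimplexCategory.toTopMap (SimplexCategory.σ i) t)

/-- Restriction of a homotopy coherent diagram along a functor, given by prefunctor data
`(Fo, Fh)` satisfying the functor laws. -/
def restrictHC {S : SmallCategory C} {T : SmallCategory D}
    (Fo : C → D) (Fh : ∀ {c d : C}, Hm S c d → Hm T (Fo c) (Fo d)) (hF : IsFuncM Fo Fh)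
    (F : HCDiagram D T) : HCDiagram C S where
  obj c := F.obj (Fo c)
  hom := fun n {c d} w => F.hom n (dkMapH Fo Fh n w)
  hom_id c x t := by
    have h : dkMapH Fo Fh 0 (idm (dkStr S 0) c) = idm (dkStr T 0) (Fo c) :=
      (dkMapH_isFuncM (Fo := Fo) (Fh := Fh) 0).1 c
    show F.hom 0 (dkMapH Fo Fh 0 (idm (dkStr S 0) c)) (x, t) = x
    rw [h]
    exact F.hom_id (Fo c) x t
  hom_comp := fun n {c d e} f g x t => by
    have h : dkMapH Fo Fh n (cmp (dkStr S n) f g) =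
        cmp (dkStr T n) (dkMapH Fo Fh n f) (dkMapH Fo Fh n g) :=
      (dkMapH_isFuncM (Fo := Fo) (Fh := Fh) n).2 f g
    show F.hom n (dkMapH Fo Fh n (cmp (dkStr S n) f g)) (x, t) = _
    rw [h]
    exact F.hom_comp n _ _ x t
  hom_face := fun n i {c d} w x t => by
    have h : dkMapH Fo Fh n (faceH S n i.1 w) = faceH T n i.1 (dkMapH Fo Fh (n+1) w) :=
      dkMapH_face hF i.1 n w
    show F.hom n (dkMapH Fo Fh n (faceH S n i.1 w)) (x, t) = _
    rw [h]
    exact F.hom_face n i _ x t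
  hom_deg := fun n i {c d} w x t => by
    have h : dkMapH Fo Fh (n+1) (degH S n i.1 w) = degH T n i.1 (dkMapH Fo Fh n w) :=
      dkMapH_deg hF i.1 n w
    show F.hom (n+1) (dkMapH Fo Fh (n+1) (degH S n i.1 w)) (x, t) = _
    rw [h]
    exact F.hom_deg n i _ x t

/-! ### The cone and homotopy colimits -/

/-- The cone `Ĉ`: the category `C` with one new terminal object `none` adjoined. -/
def coneStr (T : SmallCategory C) : SmallCategory (Option C) where
  Hom x y :=
    match y, x with
    | none, _ => PUnit
    | some d, some c => Hm T c d
    | some _, none => PEmpty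
  id x :=
    match x with
    | some c => idm T c
    | none => PUnit.unit
  comp {x y z} f g :=
    match z, y, x, f, g with
    | none, _, _, _, _ => PUnit.unit
    | some _, some _, some _, f, g => cmp T f g
    | some _, none, _, _, g => PEmpty.elim g
    | some _, some _, none, f, _ => PEmpty.elim f
  id_comp {x y} f := by
    cases x <;> cases y
    · rfl
    · exact PEmpty.elim f
    · cases f; rfl
    · show cmp T (idm T _) f = f
      exact @Category.id_comp C T _ _ f
  comp_id {x y} f := by
    cases x <;> cases y
    · cases f; rfl
    · exact PEmpty.elim f
    · cases f; rfl
    · show cmp T f (idm T _) = f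
      exact @Category.comp_id C T _ _ f
  assoc {w x y z} f g h := by
    cases w <;> cases x <;> cases y <;> cases z <;>
      first
        | rfl
        | exact PEmpty.elim f
        | exact PEmpty.elim g
        | exact PEmpty.elim h
        | exact @Category.assoc C T _ _ _ _ f g h

/-- The inclusion of `C` into its cone, on morphisms. -/
def inclHm (T : SmallCategory C) {c d : C} (f : Hm T c d) :
    Hm (coneStr T) (some c) (some d) := f

theorem inclHm_isFuncM (T : SmallCategory C) :
    IsFuncM (S := T) (U := coneStr T) some (fun {_ _} f => inclHm T f) :=
  ⟨fun _ => rfl, fun _ _ => rfl⟩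

/-- The induced inclusion `F_n C → F_n Ĉ` of Dwyer–Kan resolutions, on morphisms. -/
def coneIncl (T : SmallCategory C) (n : ℕ) {c d : C} (f : Hm (dkStr T n) c d) :
    Hm (dkStr (coneStr T) n) (some c) (some d) :=
  dkMapH (S := T) (U := coneStr T) some (fun {_ _} g => inclHm T g) n f

/-- An extension of a homotopy coherent diagram `F` of shape `C` over the cone `Ĉ`,
with value `pt` at the cone point; equivalently, a simplicial natural transformation
`φ_•(c) = F_•Ĉ(c, *) → map(F(c), pt)`. -/
structure ConeExt {T : SmallCategory C} (F : HCDiagram C T) : Type 1 where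
  pt : TopCat.{0}
  hom : ∀ (n : ℕ) (c : C), Hm (dkStr (coneStr T) n) (some c) none →
    C(↑(F.obj c) × TopSimplex n, ↑pt)
  hom_nat : ∀ (n : ℕ) {c d : C} (f : Hm (dkStr T n) c d)
    (w : Hm (dkStr (coneStr T) n) (some d) none) (x : ↑(F.obj c)) (t : TopSimplex n),
    hom n c (cmp (dkStr (coneStr T) n) (coneIncl T n f) w) (x, t) =
      hom n d w (F.hom n f (x, t), t)
  hom_face : ∀ (n : ℕ) (i : Fin (n + 2)) (c : C)
    (w : Hm (dkStr (coneStr T) (n + 1)) (some c) none)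
    (x : ↑(F.obj c)) (t : TopSimplex n),
    hom n c (faceH (coneStr T) n i.1 w) (x, t) =
      hom (n + 1) c w (x, SimplexCategory.toTopMap (SimplexCategory.δ i) t)
  hom_deg : ∀ (n : ℕ) (i : Fin (n + 1)) (c : C)
    (w : Hm (dkStr (coneStr T) n) (some c) none)
    (x : ↑(F.obj c)) (t : TopSimplex (n + 1)),
    hom (n + 1) c (degH (coneStr T) n i.1 w) (x, t) =
      hom n c w (x, SimplexCategory.toTopMap (SimplexCategory.σ i) t)

/-- `E` is a homotopy colimit (an initial extension over the cone) of `F`: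
for every extension `E'` there is a unique continuous map `φ : E.pt → E'.pt`
carrying `E` to `E'` by postcomposition.  `cyl(F) := E.pt`. -/
def IsCyl {T : SmallCategory C} (F : HCDiagram C T) (E : ConeExt F) : Prop :=
  ∀ E' : ConeExt F, ∃! φ : C(↑E.pt, ↑E'.pt),
    ∀ (n : ℕ) (c : C) (w : Hm (dkStr (coneStr T) n) (some c) none)
      (x : ↑(F.obj c)) (t : TopSimplex n),
      E'.hom n c w (x, t) = φ (E.hom n c w (x, t))


/-! ### Restriction of cone extensions along a functor -/

/-- A functor `C → D` extends to the cones, on objects. -/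
def coneO (Go : C → D) : Option C → Option D
  | some c => some (Go c)
  | none => none

/-- A functor `C → D` extends to the cones, on morphisms. -/
def coneHm {S : SmallCategory C} {U : SmallCategory D} (Go : C → D)
    (Gh : ∀ {c d : C}, Hm S c d → Hm U (Go c) (Go d)) :
    ∀ {x y : Option C}, Hm (coneStr S) x y → Hm (coneStr U) (coneO Go x) (coneO Go y)
  | some _, some _ => fun f => Gh f
  | some _, none => fun _ => PUnit.unit
  | none, none => fun _ => PUnit.unit
  | none, some _ => fun f => PEmpty.elim f

theorem coneHm_isFuncM {S : SmallCategory C} {U : SmallCategory D} {Go : C → D}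
    {Gh : ∀ {c d : C}, Hm S c d → Hm U (Go c) (Go d)} (hG : IsFuncM Go Gh) :
    IsFuncM (coneO Go) (fun {_ _} f => coneHm Go Gh f) := by
  constructor
  · intro x
    cases x
    · rfl
    · exact hG.1 _
  · intro a b c f g
    cases a <;> cases b <;> cases c <;>
      first
        | rfl
        | exact PEmpty.elim f
        | exact PEmpty.elim g
        | exact hG.2 f g

theorem dkMapH_coneIncl {S : SmallCategory C} {U : SmallCategory D} {Go : C → D}
    {Gh : ∀ {c d : C}, Hm S c d → Hm U (Go c) (Go d)} (hG : IsFuncM Go Gh)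
    (n : ℕ) {c d : C} (f : Hm (dkStr S n) c d) :
    dkMapH (coneO Go) (fun {_ _} g => coneHm Go Gh g) n (coneIncl S n f) =
      coneIncl U n (dkMapH Go Gh n f) := by
  have a := dkMapH_comp (Fo := some) (Fh := fun {_ _} g => inclHm S g)
    (Go := coneO Go) (Gh := fun {_ _} g => coneHm Go Gh g) (coneHm_isFuncM hG) n f
  have b := dkMapH_comp (Fo := Go) (Fh := fun {_ _} g => Gh g)
    (Go := some) (Gh := fun {_ _} g => inclHm U g) (inclHm_isFuncM U) n f
  exact a.trans ((dkMapH_congr (fun {_ _} g => rfl) n f).trans b.symm)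

/-- Restriction of a cone extension along a functor:  the restriction of the underlying
diagram inherits an extension with the same value at the cone point. -/
def restrictExt {S : SmallCategory C} {T : SmallCategory D}
    (Go : C → D) (Gh : ∀ {c d : C}, Hm S c d → Hm T (Go c) (Go d)) (hG : IsFuncM Go Gh)
    (F : HCDiagram D T) (E : ConeExt F) : ConeExt (restrictHC Go Gh hG F) where
  pt := E.pt
  hom n c w := E.hom n (Go c)
    (dkMapH (coneO Go) (fun {_ _} g => coneHm Go Gh g) n w)
  hom_nat := fun n {c d} f w x t => by
    have h1 : dkMapH (coneO Go) (fun {_ _} g => coneHm Go Gh g) n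
        (cmp (dkStr (coneStr S) n) (coneIncl S n f) w) =
        cmp (dkStr (coneStr T) n)
          (dkMapH (coneO Go) (fun {_ _} g => coneHm Go Gh g) n (coneIncl S n f))
          (dkMapH (coneO Go) (fun {_ _} g => coneHm Go Gh g) n w) :=
      (dkMapH_isFuncM n).2 _ _
    show E.hom n (Go c) (dkMapH (coneO Go) (fun {_ _} g => coneHm Go Gh g) n
      (cmp (dkStr (coneStr S) n) (coneIncl S n f) w)) (x, t) = _
    rw [h1, dkMapH_coneIncl hG n f]
    exact E.hom_nat n (dkMapH Go Gh n f) _ x t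
  hom_face := fun n i c w x t => by
    have h : dkMapH (coneO Go) (fun {_ _} g => coneHm Go Gh g) n
        (faceH (coneStr S) n i.1 w) =
        faceH (coneStr T) n i.1
          (dkMapH (coneO Go) (fun {_ _} g => coneHm Go Gh g) (n+1) w) :=
      dkMapH_face (coneHm_isFuncM hG) i.1 n w
    show E.hom n (Go c) (dkMapH (coneO Go) (fun {_ _} g => coneHm Go Gh g) n
      (faceH (coneStr S) n i.1 w)) (x, t) = _
    rw [h]
    exact E.hom_face n i (Go c) _ x t
  hom_deg := fun n i c w x t => by
    have h : dkMapH (coneO Go) (fun {_ _} g => coneHm Go Gh g) (n+1)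
        (degH (coneStr S) n i.1 w) =
        degH (coneStr T) n i.1
          (dkMapH (coneO Go) (fun {_ _} g => coneHm Go Gh g) n w) :=
      dkMapH_deg (coneHm_isFuncM hG) i.1 n w
    show E.hom (n+1) (Go c) (dkMapH (coneO Go) (fun {_ _} g => coneHm Go Gh g) (n+1)
      (degH (coneStr S) n i.1 w)) (x, t) = _
    rw [h]
    exact E.hom_deg n i (Go c) _ x t

/-- The image of a cone morphism `some c ⟶ none` under `F_•` of the cone extension of a
functor `(Go, Gh)`. -/
def coneMapToPt {S : SmallCategory C} {T : SmallCategory D}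
    (Go : C → D) (Gh : ∀ {c d : C}, Hm S c d → Hm T (Go c) (Go d)) (n : ℕ) (c : C)
    (w : Hm (dkStr (coneStr S) n) (some c) none) :
    Hm (dkStr (coneStr T) n) (some (Go c)) none :=
  dkMapH (coneO Go) (fun {_ _} g => coneHm Go Gh g) n w

/-! ### Strict diagrams as homotopy coherent diagrams -/

/-- A strict diagram, i.e. a functor `(C,T) → Top`, regarded as a homotopy coherent diagram
by precomposition with the augmentation `ε : F_•C → C`. -/
def strictToHC (T : SmallCategory C) (F : @CategoryTheory.Functor C T TopCat.{0} _) :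
    HCDiagram C T where
  obj := F.obj
  hom n {c d} w := (F.map (epsH T n w)).hom.comp (ContinuousMap.fst)
  hom_id c x t := by
    have h : epsH T 0 (idm (dkStr T 0) c) = idm T c := (epsH_isFuncM T 0).1 c
    show (F.map (epsH T 0 (idm (dkStr T 0) c))) x = x
    rw [h]
    rw [@CategoryTheory.Functor.map_id C T TopCat _ F c]
    rfl
  hom_comp := fun n {c d e} f g x t => by
    have h : epsH T n (cmp (dkStr T n) f g) = cmp T (epsH T n f) (epsH T n g) :=
      (epsH_isFuncM T n).2 f g
    show (F.map (epsH T n (cmp (dkStr T n) f g))) x = _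
    rw [h, @CategoryTheory.Functor.map_comp C T TopCat _ F _ _ _ _ _]
    rfl
  hom_face := fun n i {c d} w x t => by
    have h : epsH T n (faceH T n i.1 w) = epsH T (n+1) w := epsH_face T i.1 n w
    show (F.map (epsH T n (faceH T n i.1 w))) x = _
    rw [h]
    rfl
  hom_deg := fun n i {c d} w x t => by
    have h : epsH T (n+1) (degH T n i.1 w) = epsH T n w := epsH_deg T i.1 n w
    show (F.map (epsH T (n+1) (degH T n i.1 w))) x = _
    rw [h]
    rfl

/-! ### Composable strings and nerves -/

/-- A composable string of morphisms of `(C, T)` (identities allowed): an element of the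
nerve of `C` of length `length`. -/
inductive CStr (T : SmallCategory C) : C → C → Type
  | nil (c : C) : CStr T c c
  | cons {a b c : C} (p : CStr T a b) (f : Hm T b c) : CStr T a c

/-- The length of a composable string. -/
def CStr.length {T : SmallCategory C} : ∀ {a b : C}, CStr T a b → ℕ
  | _, _, .nil _ => 0
  | _, _, .cons p _ => p.length + 1

/-- The action of a functor (given as prefunctor data) on composable strings, i.e. on the
nerve. -/
def mapCStr {S : SmallCategory C} {U : SmallCategory D} (Fo : C → D)
    (Fh : ∀ {c d : C}, Hm S c d → Hm U (Fo c) (Fo d)) :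
    ∀ {a b : C}, CStr S a b → CStr U (Fo a) (Fo b)
  | _, _, .nil c => .nil (Fo c)
  | _, _, .cons p f => .cons (mapCStr Fo Fh p) (Fh f)

theorem length_mapCStr {S : SmallCategory C} {U : SmallCategory D} (Fo : C → D)
    (Fh : ∀ {c d : C}, Hm S c d → Hm U (Fo c) (Fo d)) :
    ∀ {a b : C} (p : CStr S a b), (mapCStr Fo Fh p).length = p.length
  | _, _, .nil _ => by simp [mapCStr, CStr.length]
  | _, _, .cons p f => by
      simp [mapCStr, CStr.length, length_mapCStr Fo Fh p]

/-- The disjoint union `⨿_k N_k(C)` of all the nerve levels of `(C, T)`: the set of all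
composable strings. -/
def TotalNerve (T : SmallCategory C) : Type := Σ cd : C × C, CStr T cd.1 cd.2

/-- The set `N_k(C)` of `k`-simplices of the nerve of `(C, T)`. -/
def NerveLevel (T : SmallCategory C) (k : ℕ) : Type :=
  {z : TotalNerve T // z.2.length = k}

/-- The map induced on (total) nerves by a functor. -/
def mapTotalNerve {S : SmallCategory C} {U : SmallCategory D} (Fo : C → D)
    (Fh : ∀ {c d : C}, Hm S c d → Hm U (Fo c) (Fo d)) :
    TotalNerve S → TotalNerve U :=
  fun z => ⟨(Fo z.1.1, Fo z.1.2), mapCStr Fo Fh z.2⟩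

/-- The map induced on `k`-simplices of nerves by a functor. -/
def mapNerveLevel {S : SmallCategory C} {U : SmallCategory D} (Fo : C → D)
    (Fh : ∀ {c d : C}, Hm S c d → Hm U (Fo c) (Fo d)) (k : ℕ) :
    NerveLevel S k → NerveLevel U k :=
  fun z => ⟨mapTotalNerve Fo Fh z.1, by
    obtain ⟨⟨cd, p⟩, hp⟩ := z
    exact (length_mapCStr Fo Fh p).trans hp⟩

/-- A pushout square of types (sets), via the universal property. -/
def IsPushoutTypes {A B₁ B₂ X : Type}
    (f₁ : A → B₁) (f₂ : A → B₂) (g₁ : B₁ → X) (g₂ : B₂ → X) : Prop :=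
  (∀ a, g₁ (f₁ a) = g₂ (f₂ a)) ∧
  ∀ (Z : Type) (u : B₁ → Z) (v : B₂ → Z), (∀ a, u (f₁ a) = v (f₂ a)) →
    ∃! w : X → Z, (∀ b, w (g₁ b) = u b) ∧ (∀ b, w (g₂ b) = v b)

/-! ### Miscellaneous topology -/

/-- A continuous map is a homotopy equivalence. -/
def IsHomotopyEquivMap {X Y : Type} [TopologicalSpace X] [TopologicalSpace Y]
    (f : C(X, Y)) : Prop :=
  ∃ g : C(Y, X), (g.comp f).Homotopic (ContinuousMap.id X) ∧
    (f.comp g).Homotopic (ContinuousMap.id Y)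

end HC

open HC

namespace HC

variable {C D : Type}

/-- Concatenation of composable strings. -/
def CStr.append {T : SmallCategory C} {a b : C} (p : CStr T a b) :
    ∀ {c : C}, CStr T b c → CStr T a c
  | _, .nil _ => p
  | _, .cons q f => .cons (p.append q) f

/-- The underlying word of a morphism of `FC` (a word of non-identity morphisms),
as a composable string in `C`. -/
def flattenPath {T : SmallCategory C} : ∀ {a b : C}, PathE T a b → CStr T a b
  | _, _, .nil c => .nil c
  | _, _, .cons p e => .cons (flattenPath p) e.1

/-- Flattening a word of strings into a single string. -/
def flattenPE {S : SmallCategory C} {T : SmallCategory C}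
    (g : ∀ {a b : C}, Hm S a b → CStr T a b) :
    ∀ {a b : C}, PathE S a b → CStr T a b
  | _, _, .nil c => .nil c
  | _, _, .cons p e => (flattenPE g p).append (g e.1)

/-- Deleting all parentheses: the underlying composable string of `C`-morphisms of a
morphism of `F_nC`. -/
def flattenDK (T : SmallCategory C) : ∀ (n : ℕ) {a b : C}, Hm (dkStr T n) a b → CStr T a b
  | 0, _, _, p => flattenPath p
  | n + 1, _, _, p => flattenPE (fun {_ _} f => flattenDK T n f) p

/-- The map `α : N_m(F_nC) → ⨿_k N_k(C)` deleting all parentheses: a string of `m`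
composable `F_nC`-morphisms is sent to the concatenation of the underlying strings of
morphisms of `C`. -/
def alphaStr (T : SmallCategory C) (n : ℕ) :
    ∀ {a b : C}, CStr (dkStr T n) a b → CStr T a b
  | _, _, .nil c => .nil c
  | _, _, .cons p f => (alphaStr T n p).append (flattenDK T n f)

/-- The map `α` on the `m`-nerve of `F_nC`, with values in the total nerve `⨿_k N_k(C)`. -/
def alphaNerve (T : SmallCategory C) (n m : ℕ) :
    NerveLevel (dkStr T n) m → TotalNerve T :=
  fun z => ⟨z.1.1, alphaStr T n z.1.2⟩

end HC

/-!
Deleting parentheses one level at a time reduces the claim to two pull-back squares with fixed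
endpoints. A word of non-identity morphisms is the same thing as a string all of whose letters are
non-identities, and `f` both preserves and reflects this condition, so words in `D` over strings of
`C` lift uniquely. A factorization of the image `f(v)` of a string `v` cuts the word `f(v)` at some
position, hence comes from a unique factorization of `v`; so a string of morphisms which each
carry a label pulls back along the concatenation of the labels as soon as a single labelled
morphism does.
-/

namespace HC

section Square

variable {C D : Type} {Fo : C → D} {P Q R : C → C → Type} {P' Q' R' : D → D → Type}

/-- A pull-back square of families of sets indexed by pairs of objects, over a map `Fo` of objects:
the vertical maps fix the endpoints and the horizontal ones apply `Fo` to them. -/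
structure IsPullbackOver (Fo : C → D) (top : ∀ {a b : C}, P a b → P' (Fo a) (Fo b))
    (left : ∀ {a b : C}, P a b → Q a b) (right : ∀ {x y : D}, P' x y → Q' x y)
    (bottom : ∀ {a b : C}, Q a b → Q' (Fo a) (Fo b)) : Prop where
  comm : ∀ {a b : C} (p : P a b), right (top p) = bottom (left p)
  ext : ∀ {a b : C} {p p' : P a b}, top p = top p' → left p = left p' → p = p'
  exists_lift : ∀ {a b : C} {u : P' (Fo a) (Fo b)} {v : Q a b}, right u = bottom v →
    ∃ p : P a b, top p = u ∧ left p = v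

namespace IsPullbackOver

variable {top : ∀ {a b : C}, P a b → P' (Fo a) (Fo b)} {left : ∀ {a b : C}, P a b → Q a b}
  {right : ∀ {x y : D}, P' x y → Q' x y} {middle : ∀ {a b : C}, Q a b → Q' (Fo a) (Fo b)}
  {left₂ : ∀ {a b : C}, Q a b → R a b} {right₂ : ∀ {x y : D}, Q' x y → R' x y}
  {bottom : ∀ {a b : C}, R a b → R' (Fo a) (Fo b)}

theorem paste_vert (h : IsPullbackOver Fo top left right middle)
    (h₂ : IsPullbackOver Fo middle left₂ right₂ bottom) :
    IsPullbackOver Fo top (fun p ↦ left₂ (left p)) (fun u ↦ right₂ (right u)) bottom where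
  comm p := by rw [h.comm, h₂.comm]
  ext htop hleft := h.ext htop (h₂.ext (by rw [← h.comm, ← h.comm, htop]) hleft)
  exists_lift huv := by
    obtain ⟨q, hq, rfl⟩ := h₂.exists_lift huv
    obtain ⟨p, hp, rfl⟩ := h.exists_lift hq.symm
    exact ⟨p, hp, rfl⟩

theorem existsUnique_sigma (h : IsPullbackOver Fo top left right middle)
    {u : Σ xy : D × D, P' xy.1 xy.2} {v : Σ ab : C × C, Q ab.1 ab.2}
    (huv : (⟨u.1, right u.2⟩ : Σ xy : D × D, Q' xy.1 xy.2) =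
      ⟨(Fo v.1.1, Fo v.1.2), middle v.2⟩) :
    ∃! z : Σ ab : C × C, P ab.1 ab.2,
      ⟨(Fo z.1.1, Fo z.1.2), top z.2⟩ = u ∧ ⟨z.1, left z.2⟩ = v := by
  obtain ⟨⟨x, y⟩, u⟩ := u
  obtain ⟨⟨a, b⟩, v⟩ := v
  obtain ⟨hxy, huv⟩ := Sigma.mk.inj huv
  obtain ⟨rfl, rfl⟩ := Prod.mk.inj hxy
  obtain ⟨p, rfl, rfl⟩ := h.exists_lift (a := a) (b := b) (v := v) (eq_of_heq huv)
  refine ⟨⟨(a, b), p⟩, ⟨rfl, rfl⟩, ?_⟩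
  rintro ⟨⟨a', b'⟩, p'⟩ ⟨htop, hleft⟩
  obtain ⟨hab, hleft⟩ := Sigma.mk.inj hleft
  obtain ⟨rfl, rfl⟩ := Prod.mk.inj hab
  exact congrArg (Sigma.mk _) (h.ext (eq_of_heq (Sigma.mk.inj htop).2) (eq_of_heq hleft))

end IsPullbackOver

end Square

variable {C D : Type}

section Append

theorem CStr.append_inj_of_length_eq {T : SmallCategory C} {a b c c' : C} {p : CStr T a c}
    {q : CStr T c b} {p' : CStr T a c'} {q' : CStr T c' b}
    (hlength : q.length = q'.length) (happend : p.append q = p'.append q') :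
    (⟨c, p, q⟩ : Σ c, CStr T a c × CStr T c b) = ⟨c', p', q'⟩ := by
  induction q with
  | nil =>
    cases q' with
    | nil => cases happend; rfl
    | cons => simp only [CStr.length] at hlength; omega
  | cons q f ih =>
    cases q' with
    | nil => simp only [CStr.length] at hlength; omega
    | cons q' f' =>
      simp only [CStr.length, Nat.add_right_cancel_iff] at hlength
      injection happend with hmid _ hinit hlast
      subst hmid
      cases ih hlength (eq_of_heq hinit)
      cases hlast
      rfl

variable {S : SmallCategory C} {U : SmallCategory D} (Fo : C → D)
  (Fh : ∀ {c d : C}, Hm S c d → Hm U (Fo c) (Fo d))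

theorem mapCStr_append {a b c : C} (p : CStr S a b) (q : CStr S b c) :
    mapCStr Fo Fh (p.append q) = (mapCStr Fo Fh p).append (mapCStr Fo Fh q) := by
  induction q with
  | nil => simp only [CStr.append, mapCStr]
  | cons q f ih => simp only [CStr.append, mapCStr, ih]

theorem exists_append_eq_of_append_eq_mapCStr {a b : C} {y : D} {v : CStr S a b}
    {p : CStr U (Fo a) y} {q : CStr U y (Fo b)} (h : p.append q = mapCStr Fo Fh v) :
    ∃ (c : C) (v₁ : CStr S a c) (v₂ : CStr S c b), v₁.append v₂ = v ∧
      (⟨y, p, q⟩ : Σ y, CStr U (Fo a) y × CStr U y (Fo b)) =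
        ⟨Fo c, mapCStr Fo Fh v₁, mapCStr Fo Fh v₂⟩ := by
  induction v generalizing y with
  | nil =>
    cases q with
    | nil =>
      rw [mapCStr] at h
      obtain rfl : p = .nil _ := h
      exact ⟨a, .nil a, .nil a, rfl, by rw [mapCStr]⟩
    | cons => rw [mapCStr] at h; cases h
  | @cons b d v f ih =>
    cases q with
    | nil => exact ⟨d, v.cons f, .nil d, rfl, by rw [← h, mapCStr]; rfl⟩
    | cons q g =>
      rw [mapCStr] at h
      injection h with hmid _ hinit hlast
      subst hmid
      obtain ⟨c, v₁, v₂, rfl, hsplit⟩ := ih (eq_of_heq hinit)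
      cases hsplit
      cases hlast
      exact ⟨c, v₁, v₂.cons f, rfl, by rw [mapCStr]⟩

end Append

section FlatMap

/-- The concatenation of the strings `g f`, where `f` runs over the letters of a string. It deletes
the outermost parentheses when `g` is the deletion of all the others. -/
def CStr.flatMap {S T : SmallCategory C} (g : ∀ {a b : C}, Hm S a b → CStr T a b)
    {a : C} : ∀ {b : C}, CStr S a b → CStr T a b
  | _, .nil _ => .nil a
  | _, .cons p f => (p.flatMap g).append (g f)

theorem alphaStr_eq_flatMap (T : SmallCategory C) (n : ℕ) {a b : C} :
    (alphaStr T n : CStr (dkStr T n) a b → CStr T a b) = CStr.flatMap (flattenDK T n) := by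
  funext p
  induction p with
  | nil => simp only [alphaStr, CStr.flatMap]
  | cons p f ih => simp only [alphaStr, CStr.flatMap, ih]

theorem flattenPE_eq_flatMap_flattenPath {S T : SmallCategory C}
    (g : ∀ {a b : C}, Hm S a b → CStr T a b) {a b : C} (p : PathE S a b) :
    flattenPE g p = (flattenPath p).flatMap g := by
  induction p with
  | nil => simp only [flattenPE, flattenPath, CStr.flatMap]
  | cons p e ih => simp only [flattenPE, flattenPath, CStr.flatMap, ih]

namespace IsPullbackOver

variable {S S' : SmallCategory C} {U U' : SmallCategory D} {Fo : C → D}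
  {Fh : ∀ {c d : C}, Hm S c d → Hm U (Fo c) (Fo d)}
  {Gh : ∀ {c d : C}, Hm S' c d → Hm U' (Fo c) (Fo d)}
  {labelS : ∀ {a b : C}, Hm S' a b → CStr S a b} {labelU : ∀ {x y : D}, Hm U' x y → CStr U x y}

theorem flatMap_mapCStr (h : IsPullbackOver Fo Gh labelS labelU (mapCStr Fo Fh)) {a b : C}
    (z : CStr S' a b) :
    (mapCStr Fo Gh z).flatMap labelU = mapCStr Fo Fh (z.flatMap labelS) := by
  induction z with
  | nil => simp only [mapCStr, CStr.flatMap]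
  | cons z f ih => simp only [mapCStr, CStr.flatMap, mapCStr_append, ih, h.comm]

theorem length_label_eq (h : IsPullbackOver Fo Gh labelS labelU (mapCStr Fo Fh)) {b b' c : C}
    {f : Hm S' b c} {f' : Hm S' b' c}
    (hf : (⟨Fo b, Gh f⟩ : Σ x, Hm U' x (Fo c)) = ⟨Fo b', Gh f'⟩) :
    (labelS f).length = (labelS f').length :=
  calc (labelS f).length
    _ = (labelU (Gh f)).length := by rw [h.comm, length_mapCStr]
    _ = (labelU (Gh f')).length :=
      congrArg (fun s : Σ x, Hm U' x (Fo c) ↦ (labelU s.2).length) hf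
    _ = (labelS f').length := by rw [h.comm, length_mapCStr]

theorem eq_of_mapCStr_eq_of_flatMap_eq
    (h : IsPullbackOver Fo Gh labelS labelU (mapCStr Fo Fh)) {a b : C} {z z' : CStr S' a b}
    (hmap : mapCStr Fo Gh z = mapCStr Fo Gh z') (hflat : z.flatMap labelS = z'.flatMap labelS) :
    z = z' := by
  have hlength : z.length = z'.length := by
    rw [← length_mapCStr Fo Gh z, hmap, length_mapCStr]
  induction z with
  | nil =>
    cases z' with
    | nil => rfl
    | cons => simp only [CStr.length] at hlength; omega
  | cons z f ih =>
    cases z' with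
    | nil => simp only [CStr.length] at hlength; omega
    | cons z' f' =>
      simp only [CStr.length, Nat.add_right_cancel_iff] at hlength
      rw [mapCStr, mapCStr] at hmap
      injection hmap with hmid _ hinit hlast
      have hlabel := h.length_label_eq (Sigma.ext hmid hlast)
      obtain ⟨rfl, hflat⟩ := Sigma.mk.inj (CStr.append_inj_of_length_eq hlabel hflat)
      obtain ⟨hflat_init, hflat_last⟩ := Prod.mk.inj (eq_of_heq hflat)
      rw [ih (eq_of_heq hinit) hflat_init hlength, h.ext (eq_of_heq hlast) hflat_last]

theorem exists_mapCStr_eq_and_flatMap_eq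
    (h : IsPullbackOver Fo Gh labelS labelU (mapCStr Fo Fh)) {x y : D} {u : CStr U' x y}
    {a b : C} {v : CStr S a b}
    (huv : (⟨(x, y), u.flatMap labelU⟩ : TotalNerve U) = ⟨(Fo a, Fo b), mapCStr Fo Fh v⟩) :
    ∃ z : CStr S' a b, (⟨(Fo a, Fo b), mapCStr Fo Gh z⟩ : TotalNerve U') = ⟨(x, y), u⟩ ∧
      z.flatMap labelS = v := by
  induction u generalizing a b with
  | nil =>
    have hlength := congrArg (fun s : TotalNerve U ↦ s.2.length) huv
    cases v with
    | nil =>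
      rw [mapCStr] at huv
      cases huv
      exact ⟨.nil a, by rw [mapCStr], rfl⟩
    | cons => simp only [mapCStr, CStr.flatMap, CStr.length] at hlength; omega
  | cons u g ih =>
    obtain ⟨hxy, huv⟩ := Sigma.mk.inj huv
    obtain ⟨rfl, rfl⟩ := Prod.mk.inj hxy
    obtain ⟨c, v₁, v₂, rfl, hsplit⟩ :=
      exists_append_eq_of_append_eq_mapCStr Fo Fh (eq_of_heq huv)
    obtain ⟨rfl, hsplit⟩ := Sigma.mk.inj hsplit
    obtain ⟨hu, hg⟩ := Prod.mk.inj (eq_of_heq hsplit)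
    obtain ⟨z, hz, rfl⟩ := ih (congrArg (Sigma.mk _) hu)
    obtain ⟨f, rfl, rfl⟩ := h.exists_lift hg
    cases hz
    exact ⟨z.cons f, by rw [mapCStr], rfl⟩

theorem flatMap (h : IsPullbackOver Fo Gh labelS labelU (mapCStr Fo Fh)) :
    IsPullbackOver Fo (mapCStr Fo Gh) (CStr.flatMap labelS) (CStr.flatMap labelU)
      (mapCStr Fo Fh) where
  comm := h.flatMap_mapCStr
  ext := h.eq_of_mapCStr_eq_of_flatMap_eq
  exists_lift huv := by
    obtain ⟨z, hz, hflat⟩ := h.exists_mapCStr_eq_and_flatMap_eq (congrArg (Sigma.mk _) huv)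
    exact ⟨z, eq_of_heq (Sigma.mk.inj hz).2, hflat⟩

end IsPullbackOver

end FlatMap

section Word

/-- A string none of whose letters is an identity, i.e. the underlying string of a morphism of
the free category. -/
def CStr.IsReduced {T : SmallCategory C} {a : C} : ∀ {b : C}, CStr T a b → Prop
  | _, .nil _ => True
  | _, .cons p f => p.IsReduced ∧ ¬ IsIdLike T f

theorem flattenPath_cons {T : SmallCategory C} {a b c : C} (p : PathE T a b) (e : Edge T b c) :
    flattenPath (p.cons e) = (flattenPath p).cons e.1 := by
  simp only [flattenPath]

theorem exists_flattenPath_eq_iff {T : SmallCategory C} {a b : C} {v : CStr T a b} :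
    (∃ p : PathE T a b, flattenPath p = v) ↔ v.IsReduced := by
  constructor
  · rintro ⟨p, rfl⟩
    induction p with
    | nil => rw [flattenPath]; exact trivial
    | cons p e ih => rw [flattenPath_cons]; exact ⟨ih, e.2⟩
  · intro hv
    induction v with
    | nil => exact ⟨.nil a, by rw [flattenPath]⟩
    | cons v f ih =>
      obtain ⟨p, rfl⟩ := ih hv.1
      exact ⟨p.cons ⟨f, hv.2⟩, flattenPath_cons _ _⟩

theorem flattenPath_injective {T : SmallCategory C} {a b : C} :
    Function.Injective (flattenPath : PathE T a b → CStr T a b) := by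
  intro p q h
  induction p with
  | nil =>
    cases q with
    | nil => rfl
    | cons => simp only [flattenPath, reduceCtorEq] at h
  | cons p e ih =>
    cases q with
    | nil => simp only [flattenPath, reduceCtorEq] at h
    | cons q e' =>
      rw [flattenPath_cons, flattenPath_cons] at h
      injection h with hmid _ hinit hlast
      subst hmid
      rw [ih (eq_of_heq hinit), Subtype.ext (eq_of_heq hlast)]

variable {S : SmallCategory C} {U : SmallCategory D} {Fo : C → D}
  {Fh : ∀ {c d : C}, Hm S c d → Hm U (Fo c) (Fo d)}

theorem isReduced_mapCStr_iff (hId : ∀ {c d : C} (f : Hm S c d), IsIdLike U (Fh f) ↔ IsIdLike S f)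
    {a b : C} {v : CStr S a b} : (mapCStr Fo Fh v).IsReduced ↔ v.IsReduced := by
  induction v with
  | nil => simp only [mapCStr, CStr.IsReduced]
  | cons v f ih => simp only [mapCStr, CStr.IsReduced, ih, hId]

theorem pmapPath_cons_of_not_isIdLike {a b c : C} (p : PathE S a b) (e : Edge S b c)
    (he : ¬ IsIdLike U (Fh e.1)) :
    pmapPath Fo Fh (p.cons e) = (pmapPath Fo Fh p).cons ⟨Fh e.1, he⟩ := by
  rw [pmapPath_cons, edgeIm, Fop, dif_neg he]
  rfl

theorem flattenPath_pmapPath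
    (hNonId : ∀ {c d : C} (f : Hm S c d), ¬ IsIdLike S f → ¬ IsIdLike U (Fh f))
    {a b : C} (p : PathE S a b) :
    flattenPath (pmapPath Fo Fh p) = mapCStr Fo Fh (flattenPath p) := by
  induction p with
  | nil => simp only [pmapPath_nil, flattenPath, mapCStr]
  | cons p e ih =>
    rw [pmapPath_cons_of_not_isIdLike p e (hNonId e.1 e.2), flattenPath_cons, mapCStr, ← ih]
    exact flattenPath_cons _ _

theorem isPullbackOver_flattenPath
    (hId : ∀ {c d : C} (f : Hm S c d), IsIdLike U (Fh f) ↔ IsIdLike S f) :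
    IsPullbackOver Fo (pmapPath Fo Fh) flattenPath flattenPath (mapCStr Fo Fh) := by
  have hcomm : ∀ {a b : C} (p : PathE S a b),
      flattenPath (pmapPath Fo Fh p) = mapCStr Fo Fh (flattenPath p) :=
    flattenPath_pmapPath fun f ↦ mt (hId f).1
  refine ⟨hcomm, fun _ hflat ↦ flattenPath_injective hflat, fun {a b u v} huv ↦ ?_⟩
  have hv : v.IsReduced := by
    rw [← isReduced_mapCStr_iff hId, ← huv, ← exists_flattenPath_eq_iff]
    exact ⟨u, rfl⟩
  obtain ⟨p, rfl⟩ := exists_flattenPath_eq_iff.2 hv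
  exact ⟨p, flattenPath_injective ((hcomm p).trans huv.symm), rfl⟩

end Word

section Resolution

theorem not_isIdLike_cons {T : SmallCategory C} {a b c : C} (p : PathE T a b) (e : Edge T b c) :
    ¬ IsIdLike (freeCatStr T) (p.cons e) := by
  rintro ⟨rfl, h⟩
  cases (h : p.cons e = PathE.nil a)

variable {S : SmallCategory C} {U : SmallCategory D} {Fo : C → D}
  {Fh : ∀ {c d : C}, Hm S c d → Hm U (Fo c) (Fo d)}

theorem isIdLike_map (hFid : ∀ c : C, Fh (idm S c) = idm U (Fo c)) {c d : C} {f : Hm S c d}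
    (hf : IsIdLike S f) : IsIdLike U (Fh f) := by
  obtain ⟨rfl, rfl⟩ := hf
  exact ⟨rfl, hFid c⟩

theorem isIdLike_pmapPath_iff
    (hNonId : ∀ {c d : C} (f : Hm S c d), ¬ IsIdLike S f → ¬ IsIdLike U (Fh f))
    {a b : C} (p : PathE S a b) :
    IsIdLike (freeCatStr U) (pmapPath Fo Fh p) ↔ IsIdLike (freeCatStr S) p := by
  refine ⟨fun hp ↦ ?_, isIdLike_map
    (S := freeCatStr S) (U := freeCatStr U) (Fh := pmapPath Fo Fh) pmapPath_isFuncM.1⟩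
  cases p with
  | nil => exact ⟨rfl, rfl⟩
  | cons p e =>
    rw [pmapPath_cons_of_not_isIdLike p e (hNonId e.1 e.2)] at hp
    exact absurd hp (not_isIdLike_cons _ _)

theorem isIdLike_dkMapH_iff
    (hNonId : ∀ {c d : C} (f : Hm S c d), ¬ IsIdLike S f → ¬ IsIdLike U (Fh f)) (n : ℕ)
    {a b : C} (p : Hm (dkStr S n) a b) :
    IsIdLike (dkStr U n) (dkMapH Fo Fh n p) ↔ IsIdLike (dkStr S n) p := by
  induction n generalizing a b with
  | zero => exact isIdLike_pmapPath_iff hNonId p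
  | succ n ih => exact isIdLike_pmapPath_iff (fun f ↦ mt (ih f).1) p

theorem isPullbackOver_flattenDK
    (hId : ∀ {c d : C} (f : Hm S c d), IsIdLike U (Fh f) ↔ IsIdLike S f) (n : ℕ) :
    IsPullbackOver Fo (dkMapH Fo Fh n) (flattenDK S n) (flattenDK U n) (mapCStr Fo Fh) := by
  induction n with
  | zero => exact isPullbackOver_flattenPath hId
  | succ n ih =>
    have hWord := isPullbackOver_flattenPath
      (isIdLike_dkMapH_iff (Fh := Fh) (fun f ↦ mt (hId f).1) n)
    have hpaste := hWord.paste_vert ih.flatMap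
    simp only [← flattenPE_eq_flatMap_flattenPath] at hpaste
    exact hpaste

theorem isPullbackOver_alphaStr
    (hId : ∀ {c d : C} (f : Hm S c d), IsIdLike U (Fh f) ↔ IsIdLike S f) (n : ℕ) :
    IsPullbackOver Fo (mapCStr Fo (dkMapH Fo Fh n)) (alphaStr S n) (alphaStr U n)
      (mapCStr Fo Fh) := by
  simpa only [alphaStr_eq_flatMap] using (isPullbackOver_flattenDK hId n).flatMap

end Resolution

end HC

theorem nerve_of_dk_resolution_pullback_along_forgetting_parentheses_general
    (C D : Type) (S : SmallCategory C) (U : SmallCategory D)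
    (Fo : C → D) (Fh : ∀ {c d : C}, Hm S c d → Hm U (Fo c) (Fo d))
    (hId : ∀ {c d : C} (u : Hm S c d), IsIdLike U (Fh u) ↔ IsIdLike S u)
    (m n : ℕ) :
    (∀ z : NerveLevel (dkStr S n) m,
      mapTotalNerve Fo (fun {_ _} u => Fh u) (alphaNerve S n m z) =
        alphaNerve U n m
          (mapNerveLevel Fo (fun {_ _} u => dkMapH Fo Fh n u) m z)) ∧
    (∀ (u : NerveLevel (dkStr U n) m) (v : TotalNerve S),
      alphaNerve U n m u = mapTotalNerve Fo (fun {_ _} g => Fh g) v →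
      ∃! z : NerveLevel (dkStr S n) m,
        mapNerveLevel Fo (fun {_ _} g => dkMapH Fo Fh n g) m z = u ∧
        alphaNerve S n m z = v) := by
  have hPullback := isPullbackOver_alphaStr hId n
  refine ⟨fun z ↦ congrArg (Sigma.mk _) (hPullback.comm z.1.2).symm, fun u v huv ↦ ?_⟩
  obtain ⟨z, ⟨hmap, halpha⟩, hunique⟩ := hPullback.existsUnique_sigma huv
  have hlength : z.2.length = m :=
    calc z.2.length
      _ = (mapTotalNerve Fo (dkMapH Fo Fh n) z).2.length := (length_mapCStr _ _ z.2).symm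
      _ = u.1.2.length := congrArg (fun w : TotalNerve (dkStr U n) ↦ w.2.length) hmap
      _ = m := u.2
  exact ⟨⟨z, hlength⟩, ⟨Subtype.ext hmap, halpha⟩, fun w hw ↦
    Subtype.ext (hunique w.1 ⟨congrArg Subtype.val hw.1, hw.2⟩)⟩

/-- STATEMENT 16: for a functor `f : C → D` sending non-identity morphisms to non-identity
morphisms and all `m, n`, the square formed by `N_m(F_n f)`, the maps `α` deleting
parentheses, and `⨿_k N_k(f)` is a pull-back square of sets. -/
theorem nerve_of_dk_resolution_pullback_along_forgetting_parentheses
    (C D : Type) (S : SmallCategory C) (U : SmallCategory D)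
    (Fo : C → D) (Fh : ∀ {c d : C}, Hm S c d → Hm U (Fo c) (Fo d))
    (hF : IsFuncM Fo Fh)
    (hni : ∀ {c d : C} (u : Hm S c d), ¬ IsIdLike S u → ¬ IsIdLike U (Fh u))
    (m n : ℕ) :
    -- the square commutes…
    (∀ z : NerveLevel (dkStr S n) m,
      mapTotalNerve Fo (fun {_ _} u => Fh u) (alphaNerve S n m z) =
        alphaNerve U n m
          (mapNerveLevel Fo (fun {_ _} u => dkMapH Fo Fh n u) m z)) ∧
    -- …and is a pull-back of sets
    (∀ (u : NerveLevel (dkStr U n) m) (v : TotalNerve S),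
      alphaNerve U n m u = mapTotalNerve Fo (fun {_ _} g => Fh g) v →
      ∃! z : NerveLevel (dkStr S n) m,
        mapNerveLevel Fo (fun {_ _} g => dkMapH Fo Fh n g) m z = u ∧
        alphaNerve S n m z = v) := by
  exact nerve_of_dk_resolution_pullback_along_forgetting_parentheses_general C D S U Fo Fh
    (fun u ↦ ⟨not_imp_not.1 (hni u), isIdLike_map hF.1⟩) m n
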